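/- arXiv:2012.08955 — 4 statements merged into one kernel-verified Lean document; each statement's English description precedes it below -/
import Mathlib

section
/- Let 0 ≤ λ < 1 and n ≥ 2, and let K ⊂ ℝⁿ be a convex body with the origin in its interior. If G_{K,λ} is rotationally symmetric, i.e., G_{K,λ}(R t) = G_{K,λ}(t) for every orthogonal linear map R of ℝⁿ and every t ∈ ℝⁿ, then K is a Euclidean ball centered at the origin. -/
open MeasureTheory Set Pointwise Metric

/-- A convex body: a compact convex set with nonempty interior. -/
def IsConvexBody {n : ℕ} (K : Set (EuclideanSpace ℝ (Fin n))) : Prop :=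
  IsCompact K ∧ Convex ℝ K ∧ (interior K).Nonempty

/-- The λ-homothetic convex hull function `G_{K,λ}(t) = volₙ(conv(K ∪ (λK + t)))`. -/
noncomputable def homChf {n : ℕ} (K : Set (EuclideanSpace ℝ (Fin n))) (l : ℝ)
    (t : EuclideanSpace ℝ (Fin n)) : ℝ :=
  (volume (convexHull ℝ (K ∪ (t +ᵥ l • K)))).toReal

/-!
The function `G_{K,λ}` attains its minimum `vol K` exactly at those `t` with `λK + t ⊆ K`: a larger
convex set containing `K` has larger volume. The inclusion `λK + (1 - λ)x ⊆ K` says that the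
contraction of ratio `λ` centered at `x` maps `K` to itself, which by iteration and closedness
forces `x ∈ K`, and conversely holds for `x ∈ K` by convexity. So `(1 - λ)K` is the set of minimum
points of `G_{K,λ}`, and `K` inherits the rotational symmetry of `G_{K,λ}`. Since reflections act
transitively on spheres, `K` then contains the centered ball through each of its points.
-/

section HomotheticHull

variable {E : Type*} [AddCommGroup E] [Module ℝ E]

/-- The convex hull `conv(K ∪ (λK + t))` of a set and a translated homothetic copy of it, whose
volume as a function of `t` is `homChf`. -/
def homotheticHull (K : Set E) (l : ℝ) (t : E) : Set E :=
  convexHull ℝ (K ∪ (t +ᵥ l • K))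

theorem convex_homotheticHull (K : Set E) (l : ℝ) (t : E) : Convex ℝ (homotheticHull K l t) :=
  convex_convexHull ℝ _

theorem subset_homotheticHull (K : Set E) (l : ℝ) (t : E) : K ⊆ homotheticHull K l t :=
  subset_union_left.trans (subset_convexHull ℝ _)

theorem homotheticHull_eq_self_iff_subset {K : Set E} (hK : Convex ℝ K) (l : ℝ) (t : E) :
    homotheticHull K l t = K ↔ t +ᵥ l • K ⊆ K := by
  rw [← (subset_homotheticHull K l t).ge_iff_eq', homotheticHull, hK.convexHull_subset_iff,
    union_subset_iff, and_iff_right Subset.rfl]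

variable [TopologicalSpace E] [ContinuousAdd E] [ContinuousSMul ℝ E]

theorem mem_of_mapsTo_homothety {K : Set E} (hK : IsClosed K) (hne : K.Nonempty) {l : ℝ}
    (hl : |l| < 1) {x : E} (h : MapsTo (AffineMap.homothety x l) K K) : x ∈ K := by
  obtain ⟨y, hy⟩ := hne
  have hiter (k : ℕ) : l ^ k • (y - x) + x ∈ K := by
    induction k with
    | zero => simpa only [pow_zero, one_smul, sub_add_cancel] using hy
    | succ k ih =>
      simpa only [AffineMap.homothety_apply, vsub_eq_sub, vadd_eq_add, add_sub_cancel_right,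
        smul_smul, ← pow_succ'] using h ih
  have hlim : Filter.Tendsto (fun k : ℕ ↦ l ^ k • (y - x) + x) Filter.atTop (nhds x) := by
    simpa only [zero_smul, zero_add] using
      ((tendsto_pow_atTop_nhds_zero_of_abs_lt_one hl).smul_const (y - x)).add_const x
  exact hK.mem_of_tendsto hlim (.of_forall hiter)

theorem vadd_smul_subset_iff_mem {K : Set E} (hK : IsClosed K) (hconv : Convex ℝ K)
    (hne : K.Nonempty) {l : ℝ} (hl0 : 0 ≤ l) (hl1 : l < 1) {x : E} :
    (1 - l) • x +ᵥ l • K ⊆ K ↔ x ∈ K := by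
  constructor
  · refine fun h ↦ mem_of_mapsTo_homothety hK hne (abs_lt.2 ⟨by linarith, hl1⟩) fun y hy ↦ ?_
    convert h (vadd_mem_vadd_set (smul_mem_smul_set hy)) using 1
    simp only [AffineMap.homothety_apply, vsub_eq_sub, vadd_eq_add]
    module
  · rintro hx _ ⟨_, ⟨y, hy, rfl⟩, rfl⟩
    exact hconv hx hy (sub_nonneg.2 hl1.le) hl0 (sub_add_cancel 1 l)

theorem homotheticHull_eq_self_iff_mem {K : Set E} (hK : IsClosed K) (hconv : Convex ℝ K)
    (hne : K.Nonempty) {l : ℝ} (hl0 : 0 ≤ l) (hl1 : l < 1) {x : E} :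
    homotheticHull K l ((1 - l) • x) = K ↔ x ∈ K :=
  (homotheticHull_eq_self_iff_subset hconv l _).trans
    (vadd_smul_subset_iff_mem hK hconv hne hl0 hl1)

end HomotheticHull

section Measure

theorem convex_eq_of_subset_of_measure_le {E : Type*} [AddCommGroup E] [Module ℝ E]
    [TopologicalSpace E] [IsTopologicalAddGroup E] [ContinuousSMul ℝ E] [MeasurableSpace E]
    [OpensMeasurableSpace E] {μ : Measure E} [μ.IsOpenPosMeasure] {K C : Set E}
    (hK : IsClosed K) (hC : Convex ℝ C) (hint : (interior C).Nonempty) (hKC : K ⊆ C)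
    (hle : μ C ≤ μ K) (hfin : μ C ≠ ⊤) : C = K := by
  have hdiff : μ (interior C \ K) = 0 :=
    measure_mono_null (sdiff_subset_sdiff_left interior_subset)
      (ae_le_set.1 (ae_eq_of_subset_of_measure_ge hKC hle
        hK.measurableSet.nullMeasurableSet hfin).symm.le)
  have hinterior : interior C ⊆ K :=
    sdiff_eq_empty.1 ((isOpen_interior.sdiff hK).eq_empty_of_measure_zero hdiff)
  refine Subset.antisymm ?_ hKC
  calc C ⊆ closure C := subset_closure
    _ = closure (interior C) := (hC.closure_interior_eq_closure_of_nonempty_interior hint).symm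
    _ ⊆ K := closure_minimal hinterior hK

variable {E : Type*} [NormedAddCommGroup E] [NormedSpace ℝ E]

theorem isBounded_homotheticHull {K : Set E} (hK : Bornology.IsBounded K) (l : ℝ) (t : E) :
    Bornology.IsBounded (homotheticHull K l t) :=
  isBounded_convexHull.2 (hK.union ((hK.smul₀ l).vadd t))

theorem measureReal_homotheticHull_eq_iff_mem [ProperSpace E] [MeasurableSpace E]
    [OpensMeasurableSpace E] (μ : Measure E) [IsFiniteMeasureOnCompacts μ] [μ.IsOpenPosMeasure]
    {K : Set E} (hK : IsCompact K) (hconv : Convex ℝ K) (hint : (interior K).Nonempty)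
    {l : ℝ} (hl0 : 0 ≤ l) (hl1 : l < 1) {x : E} :
    μ.real (homotheticHull K l ((1 - l) • x)) = μ.real K ↔ x ∈ K := by
  rw [← homotheticHull_eq_self_iff_mem hK.isClosed hconv (hint.mono interior_subset) hl0 hl1]
  set C := homotheticHull K l ((1 - l) • x)
  have hKC : K ⊆ C := subset_homotheticHull K l _
  have hfin : μ C ≠ ⊤ := (isBounded_homotheticHull hK.isBounded l _).measure_lt_top.ne
  refine ⟨fun h ↦ ?_, congrArg μ.real⟩
  have hle : μ C ≤ μ K := ((ENNReal.toReal_eq_toReal_iff' hfin hK.measure_ne_top).1 h).le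
  exact convex_eq_of_subset_of_measure_le hK.isClosed (convex_homotheticHull K l _)
    (hint.mono (interior_mono hKC)) hKC hle hfin

end Measure

section IsometryInvariant

variable {E : Type*} [NormedAddCommGroup E] [InnerProductSpace ℝ E]

theorem exists_linearIsometryEquiv_apply_eq {x y : E} (h : ‖x‖ = ‖y‖) :
    ∃ R : E ≃ₗᵢ[ℝ] E, R x = y :=
  ⟨_, Submodule.reflection_sub h⟩

theorem closedBall_norm_subset_of_mapsTo {K : Set E} (hK : StarConvex ℝ 0 K)
    (hR : ∀ R : E ≃ₗᵢ[ℝ] E, MapsTo R K K) {x : E} (hx : x ∈ K) : closedBall 0 ‖x‖ ⊆ K := by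
  intro y hy
  rw [mem_closedBall_zero_iff] at hy
  have hmem : (‖y‖ / ‖x‖) • x ∈ K :=
    hK.smul_mem hx (by positivity) (div_le_one_of_le₀ hy (norm_nonneg x))
  have hnorm : ‖(‖y‖ / ‖x‖) • x‖ = ‖y‖ := by
    rw [norm_smul, norm_div, norm_norm, norm_norm,
      div_mul_cancel_of_imp fun hx0 ↦ le_antisymm (hy.trans_eq hx0) (norm_nonneg y)]
  obtain ⟨R, hRy⟩ := exists_linearIsometryEquiv_apply_eq hnorm
  exact hRy ▸ hR R hmem

theorem exists_eq_closedBall_of_mapsTo {K : Set E} (hK : IsCompact K) (hstar : StarConvex ℝ 0 K)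
    (h0 : K ∈ nhds 0) (hR : ∀ R : E ≃ₗᵢ[ℝ] E, MapsTo R K K) :
    ∃ r : ℝ, 0 < r ∧ K = closedBall 0 r := by
  obtain ⟨ε, hε, hεK⟩ := nhds_basis_closedBall.mem_iff.1 h0
  obtain ⟨x, hx, hmax⟩ := hK.exists_isMaxOn ⟨0, mem_of_mem_nhds h0⟩ continuous_norm.continuousOn
  refine ⟨max ε ‖x‖, lt_max_of_lt_left hε, Subset.antisymm (fun y hy ↦ ?_) ?_⟩
  · exact mem_closedBall_zero_iff.2 (le_max_of_le_right (hmax hy))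
  · -- In the zero space every point of `K` has norm zero, so the radius may have to be `ε`.
    rcases max_choice ε ‖x‖ with hr | hr <;> rw [hr]
    exacts [hεK, closedBall_norm_subset_of_mapsTo hstar hR hx]

theorem stmt14_general [FiniteDimensional ℝ E] [MeasurableSpace E] [OpensMeasurableSpace E]
    (μ : Measure E) [IsFiniteMeasureOnCompacts μ] [μ.IsOpenPosMeasure] {K : Set E}
    (hK : IsCompact K) (hconv : Convex ℝ K) (h0 : 0 ∈ interior K) {l : ℝ} (hl0 : 0 ≤ l)
    (hl1 : l < 1) (h : ∀ (R : E ≃ₗᵢ[ℝ] E) (t : E),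
      μ.real (homotheticHull K l (R t)) = μ.real (homotheticHull K l t)) :
    ∃ r : ℝ, 0 < r ∧ K = closedBall 0 r := by
  have hmem (x : E) : μ.real (homotheticHull K l ((1 - l) • x)) = μ.real K ↔ x ∈ K :=
    measureReal_homotheticHull_eq_iff_mem μ hK hconv ⟨0, h0⟩ hl0 hl1
  have hR (R : E ≃ₗᵢ[ℝ] E) : MapsTo R K K := fun x hx ↦ by
    rwa [← hmem, ← map_smul, h, hmem]
  exact exists_eq_closedBall_of_mapsTo hK (hconv.starConvex (interior_subset h0))
    (mem_interior_iff_mem_nhds.1 h0) hR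

end IsometryInvariant

theorem stmt14 {n : ℕ} (hn : 2 ≤ n) (l : ℝ) (hl0 : 0 ≤ l) (hl1 : l < 1)
    (K : Set (EuclideanSpace ℝ (Fin n))) (hK : IsConvexBody K)
    (hK0 : (0 : EuclideanSpace ℝ (Fin n)) ∈ interior K)
    (h : ∀ (R : EuclideanSpace ℝ (Fin n) ≃ₗᵢ[ℝ] EuclideanSpace ℝ (Fin n))
      (t : EuclideanSpace ℝ (Fin n)), homChf K l (R t) = homChf K l t) :
    ∃ r : ℝ, 0 < r ∧ K = Metric.closedBall 0 r :=
  stmt14_general volume hK.1 hK.2.1 hK0 hl0 hl1 h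
end

section
/- Let K, L ⊂ ℝⁿ be convex bodies. Then the function t ↦ vol_n(conv(K ∪ (t + L))) is a convex function on ℝⁿ. In particular, for any convex body K with the origin in its interior and any 0 ≤ λ < 1, the λ-homothetic convex hull function G_{K,λ} is convex, and hence all its sublevel sets are convex. -/
open MeasureTheory Set Pointwise Metric

/-!
The sets `conv (K ∪ (t + L))` form a shadow system: they are the images of the fixed convex set
`conv (K × {0} ∪ L × {1}) ⊆ E × ℝ` under the projections `(x, w) ↦ x + w • t`. Moving `t` from `t₀`
to `t₁` translates each point of the shadow along the direction `t₁ - t₀`, by an amount that is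
affine in `t`. Hence on every line parallel to `t₁ - t₀` the slice of the shadow at
`a • t₀ + b • t₁` is contained in the Minkowski combination, with weights `a` and `b`, of the slices
at `t₀` and `t₁`. For convex subsets of a line the length of a Minkowski sum is at most the sum of
the lengths, and Fubini's theorem integrates this inequality over all parallel lines.
-/

section ConvexReal

variable {S T : Set ℝ}

lemma edist_le_volume_of_convex (hS : Convex ℝ S) {x y : ℝ} (hx : x ∈ S) (hy : y ∈ S) :
    edist x y ≤ volume S :=
  calc edist x y = volume (uIcc x y) := by
        rw [Real.volume_interval, edist_dist, dist_comm, Real.dist_eq]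
    _ ≤ volume S := measure_mono (hS.ordConnected.uIcc_subset hx hy)

lemma volume_add_le_of_convex (hS : Convex ℝ S) (hT : Convex ℝ T) :
    volume (S + T) ≤ volume S + volume T := by
  refine (Real.volume_le_diam _).trans (ediam_le ?_)
  rintro _ ⟨x, hx, y, hy, rfl⟩ _ ⟨x', hx', y', hy', rfl⟩
  calc edist (x + y) (x' + y') ≤ edist x x' + edist y y' := edist_add_add_le ..
    _ ≤ volume S + volume T :=
        add_le_add (edist_le_volume_of_convex hS hx hx') (edist_le_volume_of_convex hT hy hy')

lemma volume_smul_add_smul_le (hS : Convex ℝ S) (hT : Convex ℝ T) {a b : ℝ} (ha : 0 ≤ a)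
    (hb : 0 ≤ b) :
    volume (a • S + b • T) ≤ ENNReal.ofReal a * volume S + ENNReal.ofReal b * volume T := by
  have h := volume_add_le_of_convex (hS.smul a) (hT.smul b)
  simpa only [Measure.addHaar_smul_of_nonneg volume ha, Measure.addHaar_smul_of_nonneg volume hb,
    Module.finrank_self, pow_one] using h

end ConvexReal

section LineSlice

variable {E : Type*} [AddCommGroup E] [Module ℝ E]

/-- The slice of `A` by the line through `y` with direction `v`, in the coordinate `r` of the
parametrization `r ↦ y + r • v`. -/
def lineSlice (v : E) (A : Set E) (y : E) : Set ℝ := {r | y + r • v ∈ A}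

lemma mem_lineSlice {v : E} {A : Set E} {y : E} {r : ℝ} :
    r ∈ lineSlice v A y ↔ y + r • v ∈ A := Iff.rfl

lemma lineSlice_mono (v : E) {A B : Set E} (h : A ⊆ B) (y : E) :
    lineSlice v A y ⊆ lineSlice v B y := fun _ hr => h hr

lemma convex_lineSlice (v : E) {A : Set E} (hA : Convex ℝ A) (y : E) :
    Convex ℝ (lineSlice v A y) := by
  have h : lineSlice v A y = AffineMap.lineMap (k := ℝ) y (v + y) ⁻¹' A := by
    ext r
    simp [mem_lineSlice, AffineMap.lineMap_apply, add_comm]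
  exact h ▸ hA.affine_preimage _

lemma lintegral_volume_lineSlice [MeasurableSpace E] {μ ν : Measure E} [SFinite ν] {v : E}
    (h : MeasurePreserving (fun p : E × ℝ => p.1 + p.2 • v) (ν.prod volume) μ) {A : Set E}
    (hA : MeasurableSet A) :
    ∫⁻ y, volume (lineSlice v A y) ∂ν = μ A := by
  rw [← h.measure_preimage hA.nullMeasurableSet, Measure.prod_apply (h.measurable hA)]
  rfl

end LineSlice

section Shadow

variable {E : Type*} [AddCommGroup E] [Module ℝ E]

/-- The shadow of `C ⊆ E × ℝ` with parameter `t`: the projection of `C` to `E` along the direction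
`(-t, 1)`. Letting `t` vary gives a shadow system. -/
def shadow (C : Set (E × ℝ)) (t : E) : Set E :=
  LinearMap.id.coprod (LinearMap.toSpanSingleton ℝ E t) '' C

lemma mem_shadow {C : Set (E × ℝ)} {t x : E} :
    x ∈ shadow C t ↔ ∃ p ∈ C, p.1 + p.2 • t = x := by
  simp [shadow]

lemma convex_shadow {C : Set (E × ℝ)} (hC : Convex ℝ C) (t : E) : Convex ℝ (shadow C t) :=
  hC.linear_image _

lemma shadow_convexHull (C : Set (E × ℝ)) (t : E) :
    shadow (convexHull ℝ C) t = convexHull ℝ (shadow C t) :=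
  LinearMap.image_convexHull _ _

lemma shadow_prod_zero_union_prod_one (K L : Set E) (t : E) :
    shadow (K ×ˢ {0} ∪ L ×ˢ {1}) t = K ∪ (t +ᵥ L) := by
  ext x
  simp [mem_shadow, mem_vadd_set, or_and_right, exists_or, add_comm t]

lemma lineSlice_shadow_subset (C : Set (E × ℝ)) (t₀ t₁ : E) {a b : ℝ} (hab : a + b = 1) (y : E) :
    lineSlice (t₁ - t₀) (shadow C (a • t₀ + b • t₁)) y ⊆
      a • lineSlice (t₁ - t₀) (shadow C t₀) y + b • lineSlice (t₁ - t₀) (shadow C t₁) y := by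
  intro r hr
  obtain ⟨⟨x, w⟩, hxw, hx : x + w • (a • t₀ + b • t₁) = y + r • (t₁ - t₀)⟩ := mem_shadow.1 hr
  obtain rfl : a = 1 - b := eq_sub_of_add_eq hab
  have hx' : x = y + r • (t₁ - t₀) - w • ((1 - b) • t₀ + b • t₁) := eq_sub_of_add_eq hx
  have h₀ : r - w * b ∈ lineSlice (t₁ - t₀) (shadow C t₀) y :=
    mem_shadow.2 ⟨(x, w), hxw, by rw [hx']; module⟩
  have h₁ : r + w * (1 - b) ∈ lineSlice (t₁ - t₀) (shadow C t₁) y :=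
    mem_shadow.2 ⟨(x, w), hxw, by rw [hx']; module⟩
  refine ⟨_, smul_mem_smul_set h₀, _, smul_mem_smul_set h₁, ?_⟩
  simp only [smul_eq_mul]
  ring

end Shadow

section Measure

variable {E : Type*} [NormedAddCommGroup E] [NormedSpace ℝ E] [FiniteDimensional ℝ E]
  [MeasurableSpace E] [BorelSpace E]

lemma exists_measurePreserving_add_smul (μ : Measure E) [μ.IsAddHaarMeasure] {v : E}
    (hv : v ≠ 0) :
    ∃ ν : Measure E, SFinite ν ∧
      MeasurePreserving (fun p : E × ℝ => p.1 + p.2 • v) (ν.prod volume) μ := by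
  obtain ⟨f, hf⟩ : ∃ f : E →L[ℝ] ℝ, f v = 1 := SeparatingDual.exists_eq_one hv
  let e : (f.ker × ℝ) ≃L[ℝ] E := (ContinuousLinearEquiv.prodComm ℝ f.ker ℝ).trans
    (ContinuousLinearEquiv.equivOfRightInverse f (ContinuousLinearMap.toSpanSingleton ℝ v)
      fun r => by simp [hf]).symm
  have he (p : f.ker × ℝ) : e p = p.1 + p.2 • v := by simp [e, add_comm]
  let κ : Measure f.ker := Measure.addHaar
  have : ((κ.prod volume).map e).IsAddHaarMeasure := e.isAddHaarMeasure_map _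
  obtain ⟨c, hc⟩ : ∃ c : NNReal, μ = c • (κ.prod volume).map e :=
    ⟨_, Measure.isAddLeftInvariant_eq_smul _ _⟩
  refine ⟨c • κ.map Subtype.val, inferInstance, by fun_prop, ?_⟩
  have h_prod : (κ.map Subtype.val).prod (volume : Measure ℝ) =
      (κ.prod volume).map (Prod.map Subtype.val id) := by
    rw [← Measure.map_prod_map _ _ measurable_subtype_coe measurable_id, Measure.map_id]
  rw [hc, Measure.prod_smul_left, Measure.map_smul, h_prod,
    Measure.map_map (by fun_prop) (by fun_prop)]
  congr 2
  exact funext fun p => (he p).symm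

lemma measurable_volume_lineSlice (v : E) {A : Set E} (hA : MeasurableSet A) :
    Measurable fun y => volume (lineSlice v A y) :=
  measurable_measure_prodMk_left (ν := volume)
    (hA.preimage (f := fun p : E × ℝ => p.1 + p.2 • v) (by fun_prop))

variable (μ : Measure E) [μ.IsAddHaarMeasure]

lemma measure_le_of_lineSlice_subset {A S T : Set E} (hA : Convex ℝ A) (hS : Convex ℝ S)
    (hT : Convex ℝ T) {a b : ℝ} (ha : 0 ≤ a) (hb : 0 ≤ b) {v : E} (hv : v ≠ 0)
    (h : ∀ y, lineSlice v A y ⊆ a • lineSlice v S y + b • lineSlice v T y) :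
    μ A ≤ ENNReal.ofReal a * μ S + ENNReal.ofReal b * μ T := by
  obtain ⟨ν, _, hν⟩ := exists_measurePreserving_add_smul μ hv
  have h_slice (y : E) : volume (lineSlice v (interior A) y) ≤
      ENNReal.ofReal a * volume (lineSlice v (closure S) y) +
        ENNReal.ofReal b * volume (lineSlice v (closure T) y) :=
    calc volume (lineSlice v (interior A) y)
        ≤ volume (a • lineSlice v (closure S) y + b • lineSlice v (closure T) y) :=
          measure_mono <| (lineSlice_mono v interior_subset y).trans <| (h y).trans <|
            add_subset_add (smul_set_mono (lineSlice_mono v subset_closure y))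
              (smul_set_mono (lineSlice_mono v subset_closure y))
      _ ≤ _ := volume_smul_add_smul_le (convex_lineSlice v hS.closure y)
          (convex_lineSlice v hT.closure y) ha hb
  have hS_meas := measurable_volume_lineSlice v (isClosed_closure (s := S)).measurableSet
  have hT_meas := measurable_volume_lineSlice v (isClosed_closure (s := T)).measurableSet
  -- Convex sets need not be Borel, but their frontiers are null.
  calc μ A = μ (interior A) := (measure_interior_of_null_frontier (hA.addHaar_frontier μ)).symm
    _ = ∫⁻ y, volume (lineSlice v (interior A) y) ∂ν :=
        (lintegral_volume_lineSlice hν isOpen_interior.measurableSet).symm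
    _ ≤ ∫⁻ y, ENNReal.ofReal a * volume (lineSlice v (closure S) y) +
          ENNReal.ofReal b * volume (lineSlice v (closure T) y) ∂ν := lintegral_mono h_slice
    _ = ENNReal.ofReal a * μ (closure S) + ENNReal.ofReal b * μ (closure T) := by
        rw [lintegral_add_left (hS_meas.const_mul _), lintegral_const_mul _ hS_meas,
          lintegral_const_mul _ hT_meas,
          lintegral_volume_lineSlice hν isClosed_closure.measurableSet,
          lintegral_volume_lineSlice hν isClosed_closure.measurableSet]
    _ = ENNReal.ofReal a * μ S + ENNReal.ofReal b * μ T := by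
        rw [measure_closure_of_null_frontier (hS.addHaar_frontier μ),
          measure_closure_of_null_frontier (hT.addHaar_frontier μ)]

lemma measure_shadow_smul_add_smul_le {C : Set (E × ℝ)} (hC : Convex ℝ C) (t₀ t₁ : E) {a b : ℝ}
    (ha : 0 ≤ a) (hb : 0 ≤ b) (hab : a + b = 1) :
    μ (shadow C (a • t₀ + b • t₁)) ≤
      ENNReal.ofReal a * μ (shadow C t₀) + ENNReal.ofReal b * μ (shadow C t₁) := by
  rcases eq_or_ne t₁ t₀ with rfl | hne
  · rw [← add_smul, ← add_mul, ← ENNReal.ofReal_add ha hb, hab, one_smul, ENNReal.ofReal_one,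
      one_mul]
  · exact measure_le_of_lineSlice_subset μ (convex_shadow hC _) (convex_shadow hC _)
      (convex_shadow hC _) ha hb (sub_ne_zero.2 hne) (lineSlice_shadow_subset C t₀ t₁ hab)

lemma convexOn_measureReal_shadow {C : Set (E × ℝ)} (hC : Convex ℝ C)
    (h_fin : ∀ t, μ (shadow C t) ≠ ⊤) :
    ConvexOn ℝ univ fun t => μ.real (shadow C t) := by
  refine ⟨convex_univ, fun t₀ _ t₁ _ a b ha hb hab => ?_⟩
  have h := ENNReal.toReal_mono (by finiteness [h_fin t₀, h_fin t₁])
    (measure_shadow_smul_add_smul_le μ hC t₀ t₁ ha hb hab)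
  rwa [ENNReal.toReal_add (by finiteness [h_fin t₀]) (by finiteness [h_fin t₁]),
    ENNReal.toReal_mul, ENNReal.toReal_mul, ENNReal.toReal_ofReal ha,
    ENNReal.toReal_ofReal hb] at h

theorem stmt15_general {K L : Set E} (hK : Bornology.IsBounded K) (hL : Bornology.IsBounded L) :
    ConvexOn ℝ univ fun t : E => (μ (convexHull ℝ (K ∪ (t +ᵥ L)))).toReal := by
  have h_shadow (t : E) : shadow (convexHull ℝ (K ×ˢ {0} ∪ L ×ˢ {1})) t =
      convexHull ℝ (K ∪ (t +ᵥ L)) := by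
    rw [shadow_convexHull, shadow_prod_zero_union_prod_one]
  have h_fin (t : E) : μ (convexHull ℝ (K ∪ (t +ᵥ L))) ≠ ⊤ :=
    (isBounded_convexHull.2 (hK.union (hL.vadd t))).measure_lt_top.ne
  simpa only [h_shadow, measureReal_def] using
    convexOn_measureReal_shadow μ (convex_convexHull ℝ (K ×ˢ {0} ∪ L ×ˢ {1}))
      fun t => h_shadow t ▸ h_fin t

end Measure

lemma convexOn_homChf {n : ℕ} {K : Set (EuclideanSpace ℝ (Fin n))} (hK : Bornology.IsBounded K)
    (l : ℝ) : ConvexOn ℝ univ (homChf K l) :=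
  stmt15_general volume hK (hK.smul₀ l)

theorem stmt15 {n : ℕ} (K L : Set (EuclideanSpace ℝ (Fin n)))
    (hK : IsConvexBody K) (hL : IsConvexBody L) :
    ConvexOn ℝ Set.univ
        (fun t : EuclideanSpace ℝ (Fin n) => (volume (convexHull ℝ (K ∪ (t +ᵥ L)))).toReal) ∧
      (∀ K' : Set (EuclideanSpace ℝ (Fin n)), IsConvexBody K' →
        (0 : EuclideanSpace ℝ (Fin n)) ∈ interior K' →
          ∀ l : ℝ, 0 ≤ l → l < 1 →
            ConvexOn ℝ Set.univ (homChf K' l) ∧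
              ∀ c : ℝ, Convex ℝ {t | homChf K' l t ≤ c}) :=
  ⟨stmt15_general volume hK.1.isBounded hL.1.isBounded, fun _ hK' _ l _ _ =>
    have h := convexOn_homChf hK'.1.isBounded l
    ⟨h, fun c => by simpa only [mem_univ, true_and] using h.convex_le c⟩⟩
end

section
/- Let n ≥ 2, let P ⊂ ℝⁿ be a convex polytope with nonempty interior and let δ > 0. Then the illumination body P^δ = {x ∈ ℝⁿ : vol_n(conv(P ∪ {x})) ≤ vol_n(P) + δ} is a convex polytope, i.e., the convex hull of a finite set of points. -/
open MeasureTheory Set Pointwise Metric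

/-- The illumination body `K^δ`. -/
noncomputable def illum {n : ℕ} (K : Set (EuclideanSpace ℝ (Fin n))) (δ : ℝ) :
    Set (EuclideanSpace ℝ (Fin n)) :=
  {x | (volume (convexHull ℝ (K ∪ {x}))).toReal ≤ (volume K).toReal + δ}

/-!
Describe `P` by finitely many inequalities `a ≤ 0`, with `a` affine and equal to `-1` at an interior
point `z`; they come from the vertices of the polar body of `P` with respect to `z`. For every `x`,
`conv (P ∪ {x})` is the union of `P` and of the pyramids with apex `x` over the faces `P ∩ {a = 0}`
visible from `x`, those with `0 < a x`, and these pieces overlap in null sets only. The volume of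
each pyramid is proportional to the height `a x`. Hence the volume of `conv (P ∪ {x})` is a constant
plus a finite sum of positive parts `(b x)⁺` of affine functionals. Such a sum is at most `c` iff
every subsum of the `b x` is at most `c`, so `P^δ` is cut out by finitely many affine inequalities.
It is bounded, since the sum is a convex function of `x` with bounded zero set `P`, and a bounded
polyhedron is the convex hull of its finitely many extreme points.
-/

section ConvexFunctions

theorem sum_posPart_le_iff {ι R : Type*} [AddCommGroup R] [LinearOrder R] [IsOrderedAddMonoid R]
    {s : Finset ι} {f : ι → R} {c : R} :
    ∑ i ∈ s, (f i)⁺ ≤ c ↔ ∀ t ⊆ s, ∑ i ∈ t, f i ≤ c := by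
  constructor
  · intro h t hts
    calc ∑ i ∈ t, f i ≤ ∑ i ∈ t, (f i)⁺ := Finset.sum_le_sum fun i _ ↦ le_posPart (f i)
      _ ≤ ∑ i ∈ s, (f i)⁺ :=
        Finset.sum_le_sum_of_subset_of_nonneg hts fun i _ _ ↦ posPart_nonneg (f i)
      _ ≤ c := h
  · intro h
    calc ∑ i ∈ s, (f i)⁺ = ∑ i ∈ s with 0 < f i, f i := by
          simp only [Finset.sum_filter, posPart_eq_ite_lt]
      _ ≤ c := h _ (Finset.filter_subset _ _)

variable {E : Type*} [NormedAddCommGroup E] [NormedSpace ℝ E]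

theorem convexOn_sum_posPart {ι : Type*} (s : Finset ι) (b : ι → E →ᵃ[ℝ] ℝ) :
    ConvexOn ℝ univ fun x ↦ ∑ i ∈ s, (b i x)⁺ := by
  have convexOn_posPart : ConvexOn ℝ univ fun r : ℝ ↦ r⁺ :=
    (convexOn_id convex_univ).sup (convexOn_const 0 convex_univ)
  rw [← Finset.sum_fn]
  exact Finset.sum_induction _ (ConvexOn ℝ univ) (fun _ _ ↦ ConvexOn.add)
    (convexOn_const 0 convex_univ) fun i _ ↦ convexOn_posPart.comp_affineMap (b i)

theorem mul_norm_sub_le_of_convexOn {f : E → ℝ} (hf : ConvexOn ℝ univ f) {z x : E} {R m : ℝ}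
    (hsphere : ∀ y ∈ sphere z R, m ≤ f y) (hR : 0 < R) (hx : R ≤ ‖x - z‖) :
    (m - f z) * ‖x - z‖ ≤ R * (f x - f z) := by
  have hpos : 0 < ‖x - z‖ := hR.trans_le hx
  set t := R / ‖x - z‖ with ht
  have ht0 : 0 ≤ t := by positivity
  have ht1 : t ≤ 1 := (div_le_one hpos).2 hx
  have hproj : (1 - t) • z + t • x ∈ sphere z R := by
    have : (1 - t) • z + t • x - z = t • (x - z) := by module
    rw [mem_sphere_iff_norm, this, norm_smul, Real.norm_of_nonneg ht0, ht,
      div_mul_cancel₀ _ hpos.ne']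
  have hslope : m - f z ≤ t * (f x - f z) := by
    have hconv : f ((1 - t) • z + t • x) ≤ (1 - t) * f z + t * f x :=
      hf.2 (mem_univ z) (mem_univ x) (sub_nonneg.2 ht1) ht0 (sub_add_cancel 1 t)
    linarith [hsphere _ hproj]
  rwa [ht, div_mul_eq_mul_div, le_div_iff₀ hpos] at hslope

theorem isBounded_setOf_le_of_convexOn [FiniteDimensional ℝ E] {f : E → ℝ}
    (hf : ConvexOn ℝ univ f) {c₀ : ℝ} (hne : {x | f x ≤ c₀}.Nonempty)
    (hbdd : Bornology.IsBounded {x | f x ≤ c₀}) (c : ℝ) :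
    Bornology.IsBounded {x | f x ≤ c} := by
  obtain ⟨z, hz⟩ := hne
  obtain ⟨R, hR, hball⟩ := hbdd.subset_ball_lt 0 z
  obtain ⟨m, hm, hsphere⟩ : ∃ m > c₀, ∀ y ∈ sphere z R, m ≤ f y := by
    rcases (sphere z R).eq_empty_or_nonempty with he | hne
    · exact ⟨c₀ + 1, by simp, by simp [he]⟩
    obtain ⟨y, hy, hmin⟩ :=
      (isCompact_sphere z R).exists_isMinOn hne hf.locallyLipschitz.continuous.continuousOn
    exact ⟨f y, not_le.1 fun h ↦ (mem_ball.1 (hball h)).ne hy, fun w hw ↦ hmin hw⟩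
  replace hm : 0 < m - f z := sub_pos.2 (lt_of_le_of_lt hz hm)
  refine (isBounded_closedBall (x := z) (r := max R (R * (c - f z) / (m - f z)))).subset ?_
  intro x (hx : f x ≤ c)
  rw [mem_closedBall_iff_norm, le_max_iff, le_div_iff₀' hm]
  refine (le_total ‖x - z‖ R).imp_right fun hfar ↦ ?_
  calc (m - f z) * ‖x - z‖ ≤ R * (f x - f z) := mul_norm_sub_le_of_convexOn hf hsphere hR hfar
    _ ≤ R * (c - f z) := by gcongr

end ConvexFunctions

section Polyhedra

variable {E : Type*} [NormedAddCommGroup E] [NormedSpace ℝ E]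

/-- Polytopes in vertex representation: convex hulls of finitely many points. -/
def IsPolytope (P : Set E) : Prop :=
  ∃ S : Finset E, P = convexHull ℝ (S : Set E)

/-- The polyhedron cut out by the inequalities `a x ≤ 0`, for `a` in a finite set of affine
functionals; it need not be bounded. -/
def polyhedron (A : Finset (E →ᵃ[ℝ] ℝ)) : Set E :=
  {x | ∀ a ∈ A, a x ≤ 0}

theorem IsPolytope.isCompact {P : Set E} (hP : IsPolytope P) : IsCompact P := by
  obtain ⟨S, rfl⟩ := hP
  exact S.finite_toSet.isCompact_convexHull ℝ

theorem IsPolytope.convex {P : Set E} (hP : IsPolytope P) : Convex ℝ P := by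
  obtain ⟨S, rfl⟩ := hP
  exact convex_convexHull ℝ _

theorem convex_polyhedron (A : Finset (E →ᵃ[ℝ] ℝ)) : Convex ℝ (polyhedron A) := by
  simp only [polyhedron, ofPred_forall]
  exact convex_iInter₂ fun a _ ↦ (convex_Iic (0 : ℝ)).affine_preimage a

theorem exists_polyhedron_eq_setOf_sum_posPart_le {ι : Type*} (s : Finset ι)
    (b : ι → E →ᵃ[ℝ] ℝ) (c : ℝ) :
    ∃ A, polyhedron A = {x | ∑ i ∈ s, (b i x)⁺ ≤ c} := by
  classical
  refine ⟨s.powerset.image fun t ↦ ∑ i ∈ t, b i - AffineMap.const ℝ E c, ?_⟩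
  ext x
  have apply_sum (t : Finset ι) : (∑ i ∈ t, b i) x = ∑ i ∈ t, b i x := by
    induction t using Finset.cons_induction with
    | empty => simp
    | cons i t hi ih => simp [Finset.sum_cons, -Finset.cons_eq_insert, ih]
  simp [polyhedron, sum_posPart_le_iff, apply_sum]

variable [FiniteDimensional ℝ E]

theorem isClosed_polyhedron (A : Finset (E →ᵃ[ℝ] ℝ)) : IsClosed (polyhedron A) := by
  simp only [polyhedron, ofPred_forall]
  exact isClosed_biInter fun a _ ↦ isClosed_Iic.preimage a.continuous_of_finiteDimensional

-- The segment from `y` to `x` can be prolonged beyond `x` inside the polyhedron.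
theorem eq_of_mem_extremePoints_polyhedron {A : Finset (E →ᵃ[ℝ] ℝ)} {x y : E}
    (hx : x ∈ (polyhedron A).extremePoints ℝ) (hy : y ∈ polyhedron A)
    (hactive : ∀ a ∈ A, a x = 0 → a y = 0) : y = x := by
  have hprolong : ∀ᶠ t in nhdsWithin (1 : ℝ) (Ioi 1), ∀ a ∈ A, a (AffineMap.lineMap y x t) ≤ 0 := by
    refine (Filter.eventually_all_finset A).2 fun a ha ↦ ?_
    rcases (hx.1 a ha).eq_or_lt with hax | hax
    · simp [AffineMap.apply_lineMap, hax, hactive a ha hax]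
    · have hcont : Continuous fun t : ℝ ↦ a (AffineMap.lineMap y x t) :=
        a.continuous_of_finiteDimensional.comp AffineMap.lineMap_continuous
      have hnear : ∀ᶠ t in nhds (1 : ℝ), a (AffineMap.lineMap y x t) < 0 :=
        hcont.continuousAt.eventually_lt continuousAt_const (by simpa using hax)
      exact (hnear.filter_mono nhdsWithin_le_nhds).mono fun t ↦ le_of_lt
  obtain ⟨t, hw, ht⟩ := (hprolong.and self_mem_nhdsWithin).exists
  replace ht : 1 < t := ht
  have hmem : x ∈ openSegment ℝ y (AffineMap.lineMap y x t) := by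
    convert lineMap_mem_openSegment ℝ y (AffineMap.lineMap y x t)
      ⟨inv_pos.2 (one_pos.trans ht), inv_lt_one_of_one_lt₀ ht⟩
    simp [(one_pos.trans ht).ne']
  exact (mem_extremePoints_iff_left.1 hx).2 y hy _ hw hmem

theorem finite_extremePoints_polyhedron (A : Finset (E →ᵃ[ℝ] ℝ)) :
    ((polyhedron A).extremePoints ℝ).Finite := by
  refine Set.Finite.of_injOn (f := fun x ↦ A.filter fun a ↦ a x = 0) (t := (A.powerset : Set _))
    (fun x _ ↦ Finset.mem_powerset.2 (Finset.filter_subset _ _)) ?_ (Finset.finite_toSet _)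
  intro x hx y hy (hxy : A.filter (fun a ↦ a x = 0) = A.filter fun a ↦ a y = 0)
  refine (eq_of_mem_extremePoints_polyhedron hx hy.1 fun a ha hax ↦ ?_).symm
  have hay : a ∈ A.filter fun a ↦ a y = 0 := hxy.subset (Finset.mem_filter.2 ⟨ha, hax⟩)
  exact (Finset.mem_filter.1 hay).2

theorem isPolytope_polyhedron {A : Finset (E →ᵃ[ℝ] ℝ)}
    (hbdd : Bornology.IsBounded (polyhedron A)) : IsPolytope (polyhedron A) := by
  have hfin := finite_extremePoints_polyhedron A
  refine ⟨hfin.toFinset, ?_⟩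
  rw [hfin.coe_toFinset, ← (hfin.isCompact_convexHull ℝ).isClosed.closure_eq,
    closure_convexHull_extremePoints (isCompact_of_isClosed_isBounded (isClosed_polyhedron A) hbdd)
      (convex_polyhedron A)]

end Polyhedra

section Polar

variable {E : Type*} [NormedAddCommGroup E] [NormedSpace ℝ E]

/-- The polar body of `K` with respect to the point `z`: its points are the functionals `f` for
which `f (x - z) ≤ 1` is a valid inequality on `K`. Unlike `StrongDual.polar`, it is one-sided. -/
def polarAt (z : E) (K : Set E) : Set (StrongDual ℝ E) :=
  {f | ∀ x ∈ K, f (x - z) ≤ 1}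

theorem polarAt_convexHull (z : E) (S : Set E) : polarAt z (convexHull ℝ S) = polarAt z S := by
  refine Subset.antisymm (fun f hf x hx ↦ hf x (subset_convexHull ℝ S hx)) fun f hf ↦ ?_
  have hconv : Convex ℝ {x | f (x - z) ≤ 1} := by
    simp only [map_sub, sub_le_iff_le_add]
    exact convex_halfSpace_le f.toLinearMap.isLinear _
  exact fun x hx ↦ convexHull_min hf hconv hx

theorem isBounded_polarAt {z : E} {K : Set E} (hz : z ∈ interior K) :
    Bornology.IsBounded (polarAt z K) := by
  obtain ⟨r, hr, hball⟩ := nhds_basis_closedBall.mem_iff.1 (mem_interior_iff_mem_nhds.1 hz)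
  refine isBounded_iff_forall_norm_le.2 ⟨1 / r, fun f hf ↦ ?_⟩
  refine ContinuousLinearMap.opNorm_bound_of_ball_bound hr 1 f fun v hv ↦ abs_le'.2 ?_
  have hle (w : E) (hw : ‖w‖ ≤ r) : f w ≤ 1 := by
    simpa using hf (z + w) (hball (by simpa using hw))
  rw [mem_closedBall_zero_iff] at hv
  exact ⟨hle v hv, by simpa using hle (-v) (by simpa using hv)⟩

theorem mem_of_forall_mem_polarAt {z x : E} {K : Set E} (hconv : Convex ℝ K) (hcl : IsClosed K)
    (hz : z ∈ K) (hx : ∀ f ∈ polarAt z K, f (x - z) ≤ 1) : x ∈ K := by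
  by_contra hxK
  obtain ⟨f, u, hfK, hfx⟩ := geometric_hahn_banach_closed_point hconv hcl hxK
  have hpos : 0 < u - f z := sub_pos.2 (hfK z hz)
  have hle_iff (y : E) : ((u - f z)⁻¹ • f) (y - z) ≤ 1 ↔ f y ≤ u := by
    rw [smul_apply, smul_eq_mul, inv_mul_le_iff₀ hpos, map_sub, mul_one, sub_le_sub_iff_right]
  exact hfx.not_ge <| (hle_iff x).1 <| hx _ fun y hy ↦ (hle_iff y).2 (hfK y hy).le

theorem exists_polyhedron_eq_polarAt (z : E) (S : Finset E) :
    ∃ A, polyhedron A = polarAt z (S : Set E) := by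
  classical
  refine ⟨S.image fun s ↦ (ContinuousLinearMap.apply ℝ ℝ (s - z)).toLinearMap.toAffineMap -
    AffineMap.const ℝ _ 1, ?_⟩
  ext f
  simp [polyhedron, polarAt]

variable [FiniteDimensional ℝ E]

theorem isPolytope_polarAt {z : E} {P : Set E} (hP : IsPolytope P) (hz : z ∈ interior P) :
    IsPolytope (polarAt z P) := by
  have hbdd := isBounded_polarAt hz
  obtain ⟨S, rfl⟩ := hP
  rw [polarAt_convexHull] at hbdd ⊢
  obtain ⟨A, hA⟩ := exists_polyhedron_eq_polarAt z S
  rw [← hA] at hbdd ⊢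
  exact isPolytope_polyhedron hbdd

theorem IsPolytope.exists_eq_polyhedron {z : E} {P : Set E} (hP : IsPolytope P)
    (hz : z ∈ interior P) :
    ∃ A : Finset (E →ᵃ[ℝ] ℝ), P = polyhedron A ∧ ∀ a ∈ A, a z = -1 := by
  classical
  obtain ⟨U, hU⟩ := isPolytope_polarAt hP hz
  refine ⟨U.image fun f ↦ f.toLinearMap.toAffineMap - AffineMap.const ℝ E (f z + 1), ?_, by simp⟩
  have hmem (x : E) : x ∈ P ↔ ∀ f ∈ U, f (x - z) ≤ 1 := by
    refine ⟨fun hx f hf ↦ ?_, fun hx ↦ ?_⟩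
    · have : f ∈ polarAt z P := hU ▸ subset_convexHull ℝ _ hf
      exact this x hx
    · have hconv : Convex ℝ {f : StrongDual ℝ E | f (x - z) ≤ 1} :=
        convex_halfSpace_le (ContinuousLinearMap.apply ℝ ℝ (x - z)).toLinearMap.isLinear 1
      refine mem_of_forall_mem_polarAt hP.convex hP.isCompact.isClosed (interior_subset hz) ?_
      rw [hU]
      exact fun f hf ↦ convexHull_min hx hconv hf
  ext x
  simp [hmem, polyhedron, add_comm]

end Polar

section Volume

variable {E : Type*} [NormedAddCommGroup E] [NormedSpace ℝ E]

theorem convexHull_insert_subset_setOf_nonneg {x : E} {F : Set E} {a : E →ᵃ[ℝ] ℝ} (hx : 0 ≤ a x)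
    (hF : ∀ p ∈ F, 0 ≤ a p) : convexHull ℝ (insert x F) ⊆ {y | 0 ≤ a y} :=
  convexHull_min (insert_subset hx hF) ((convex_Ici (0 : ℝ)).affine_preimage a)

/-- The pyramid with apex `x` over the part of `P` lying on the hyperplane `a = 0`. It is just
`{x}` if that part is empty. -/
def pyramid (P : Set E) (a : E →ᵃ[ℝ] ℝ) (x : E) : Set E :=
  convexHull ℝ (insert x (P ∩ {y | a y = 0}))

theorem pyramid_subset_convexHull_insert (P : Set E) (a : E →ᵃ[ℝ] ℝ) (x : E) :
    pyramid P a x ⊆ convexHull ℝ (insert x P) :=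
  convexHull_mono (insert_subset_insert inter_subset_left)

-- Intermediate value theorem for the maximum of the functionals that are positive at `x`.
theorem exists_lineMap_mem_polyhedron_inter {A : Finset (E →ᵃ[ℝ] ℝ)} {x p : E}
    (hx : x ∉ polyhedron A) (hp : p ∈ polyhedron A) :
    ∃ a ∈ A, 0 < a x ∧ ∃ t : ℝ,
      AffineMap.lineMap x p t ∈ polyhedron A ∩ {y | a y = 0} := by
  have hvisible : (A.filter fun a ↦ 0 < a x).Nonempty := by
    simpa [Finset.Nonempty, polyhedron] using hx
  set m : ℝ → ℝ := fun t ↦ (A.filter fun a ↦ 0 < a x).sup' hvisible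
    fun a ↦ AffineMap.lineMap (a x) (a p) t
  have hm : Continuous m :=
    Continuous.finset_sup'_apply hvisible fun a _ ↦ AffineMap.lineMap_continuous
  have hm0 : 0 ≤ m 0 := by
    obtain ⟨a, ha⟩ := hvisible
    have hle := Finset.le_sup' (fun a : E →ᵃ[ℝ] ℝ ↦ AffineMap.lineMap (a x) (a p) (0 : ℝ)) ha
    rw [AffineMap.lineMap_apply_zero] at hle
    exact (Finset.mem_filter.1 ha).2.le.trans hle
  have hm1 : m 1 ≤ 0 := Finset.sup'_le _ _ fun a ha ↦ by
    simpa using hp a (Finset.mem_filter.1 ha).1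
  obtain ⟨t, ht, hmt⟩ := intermediate_value_Icc' zero_le_one hm.continuousOn ⟨hm1, hm0⟩
  obtain ⟨a, ha, hat⟩ := Finset.exists_mem_eq_sup' hvisible
    fun a ↦ AffineMap.lineMap (a x) (a p) t
  obtain ⟨haA, hax⟩ := Finset.mem_filter.1 ha
  refine ⟨a, haA, hax, t, fun b hb ↦ ?_, (a.apply_lineMap x p t).trans (hat.symm.trans hmt)⟩
  rw [b.apply_lineMap]
  by_cases hbx : 0 < b x
  · exact (Finset.le_sup' (fun a : E →ᵃ[ℝ] ℝ ↦ AffineMap.lineMap (a x) (a p) t)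
      (Finset.mem_filter.2 ⟨hb, hbx⟩)).trans hmt.le
  · exact (convex_Iic (0 : ℝ)).lineMap_mem (not_lt.1 hbx) (hp b hb) ht

theorem convexHull_insert_polyhedron {A : Finset (E →ᵃ[ℝ] ℝ)} (hne : (polyhedron A).Nonempty)
    (x : E) :
    convexHull ℝ (insert x (polyhedron A)) =
      polyhedron A ∪ ⋃ a ∈ A.filter fun a ↦ 0 < a x, pyramid (polyhedron A) a x := by
  set P := polyhedron A
  have hP : Convex ℝ P := convex_polyhedron A
  refine Subset.antisymm (fun y hy ↦ ?_) (union_subset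
    ((subset_insert x P).trans (subset_convexHull ℝ _))
    (iUnion₂_subset fun a _ ↦ pyramid_subset_convexHull_insert P a x))
  obtain ⟨p, hp, s, hs, rfl⟩ : ∃ p ∈ P, ∃ s ∈ Icc (0 : ℝ) 1, AffineMap.lineMap x p s = y := by
    simpa [convexHull_insert hne, hP.convexHull_eq, mem_convexJoin, segment_eq_image_lineMap]
      using hy
  by_cases hx : x ∈ P
  · exact Or.inl (hP.lineMap_mem hx hp hs)
  obtain ⟨a, ha, hax, t, hqP, hqa⟩ := exists_lineMap_mem_polyhedron_inter hx hp
  have mem_of_between {C : Set E} (hC : Convex ℝ C) {r u v : ℝ} (hu : AffineMap.lineMap x p u ∈ C)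
      (hv : AffineMap.lineMap x p v ∈ C) (hr : r ∈ Icc u v) : AffineMap.lineMap x p r ∈ C :=
    (hC.affine_preimage (AffineMap.lineMap x p)).ordConnected.out hu hv hr
  rcases le_total t s with hts | hst
  · exact Or.inl (mem_of_between hP hqP (by simpa using hp) ⟨hts, hs.2⟩)
  · refine Or.inr (mem_biUnion (Finset.mem_filter.2 ⟨ha, hax⟩) ?_)
    refine mem_of_between (convex_convexHull ℝ _) (u := 0) (v := t) ?_ ?_ ⟨hs.1, hst⟩
    · simpa using subset_convexHull ℝ _ (mem_insert x _)
    · exact subset_convexHull ℝ _ (mem_insert_of_mem x ⟨hqP, hqa⟩)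

variable [FiniteDimensional ℝ E] [MeasurableSpace E] [BorelSpace E]
  (μ : Measure E) [μ.IsAddHaarMeasure]

theorem addHaar_setOf_affineMap_eq_zero {a : E →ᵃ[ℝ] ℝ} (ha : a ≠ 0) : μ {x | a x = 0} = 0 := by
  have hcoe : {x | a x = 0} = ((affineSpan ℝ {(0 : ℝ)}).comap a : Set E) := by
    ext x
    simp
  rw [hcoe]
  refine Measure.addHaar_affineSubspace μ _ fun htop ↦ ha (AffineMap.ext fun x ↦ ?_)
  have hx : x ∈ {x | a x = 0} := by simp [hcoe, htop]
  exact hx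

theorem aedisjoint_of_affineMap_separating {s t : Set E} {a : E →ᵃ[ℝ] ℝ} (ha : a ≠ 0)
    (hs : s ⊆ {x | a x ≤ 0}) (ht : t ⊆ {x | 0 ≤ a x}) : AEDisjoint μ s t :=
  measure_mono_null (fun _ hx ↦ le_antisymm (hs hx.1) (ht hx.2))
    (addHaar_setOf_affineMap_eq_zero μ ha)

theorem addHaar_image_affineMap (f : E →ᵃ[ℝ] E) (s : Set E) :
    μ (f '' s) = ENNReal.ofReal |f.linear.det| * μ s := by
  have himage : f '' s = (fun y ↦ y + f 0) '' (f.linear '' s) := by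
    rw [image_image, f.decomp]
    simp
  rw [himage, image_add_right, measure_preimage_add_right, Measure.addHaar_image_linearMap]

theorem aedisjoint_polyhedron_pyramid {A : Finset (E →ᵃ[ℝ] ℝ)} {a : E →ᵃ[ℝ] ℝ} {x : E}
    (ha : a ∈ A) (hax : 0 < a x) :
    AEDisjoint μ (polyhedron A) (pyramid (polyhedron A) a x) := by
  refine aedisjoint_of_affineMap_separating μ (a := a) ?_ (fun y hy ↦ hy a ha)
    (convexHull_insert_subset_setOf_nonneg hax.le fun p hp ↦ hp.2.ge)
  rintro rfl
  simp at hax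

-- The hyperplane `b x • a = a x • b` contains `x` and separates the two pyramids.
theorem aedisjoint_pyramid_pyramid {A : Finset (E →ᵃ[ℝ] ℝ)} {a b : E →ᵃ[ℝ] ℝ} {x : E}
    (ha : a ∈ A) (hb : b ∈ A) (hax : 0 < a x) (hbx : 0 < b x) (hab : a x • b ≠ b x • a) :
    AEDisjoint μ (pyramid (polyhedron A) a x) (pyramid (polyhedron A) b x) := by
  refine aedisjoint_of_affineMap_separating μ (sub_ne_zero.2 hab) ?_ ?_
  · have hsub : pyramid (polyhedron A) a x ⊆ {y | 0 ≤ (b x • a - a x • b) y} :=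
      convexHull_insert_subset_setOf_nonneg (by simp [mul_comm]) fun p ⟨hpA, hpa⟩ ↦ by
        simpa [show a p = 0 from hpa] using mul_nonpos_of_nonneg_of_nonpos hax.le (hpA b hb)
    refine hsub.trans fun y hy ↦ ?_
    simpa using hy
  · exact convexHull_insert_subset_setOf_nonneg (by simp [mul_comm]) fun p ⟨hpA, hpb⟩ ↦ by
      simpa [show b p = 0 from hpb] using mul_nonpos_of_nonneg_of_nonpos hbx.le (hpA a ha)

theorem pairwise_aedisjoint_pyramid {A : Finset (E →ᵃ[ℝ] ℝ)} {z : E} (hz : ∀ a ∈ A, a z = -1)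
    (x : E) :
    ((A.filter fun a ↦ 0 < a x : Finset _) : Set (E →ᵃ[ℝ] ℝ)).Pairwise
      (Function.onFun (AEDisjoint μ) fun a ↦ pyramid (polyhedron A) a x) := by
  intro a ha b hb hab
  obtain ⟨haA, hax⟩ := Finset.mem_filter.1 ha
  obtain ⟨hbA, hbx⟩ := Finset.mem_filter.1 hb
  refine aedisjoint_pyramid_pyramid μ haA hbA hax hbx fun heq ↦ hab ?_
  have hval : a x = b x := by
    simpa [hz a haA, hz b hbA] using DFunLike.congr_fun heq z
  rw [hval] at heq
  exact (smul_right_injective _ hbx.ne' heq).symm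

-- The affine map that fixes the hyperplane `a = 0` pointwise and sends `x₀` to `x` has determinant
-- `a x / a x₀`.
theorem measureReal_pyramid_mul (P : Set E) {a : E →ᵃ[ℝ] ℝ} {x x₀ : E} (hx₀ : 0 < a x₀)
    (hx : 0 < a x) :
    μ.real (pyramid P a x) * a x₀ = μ.real (pyramid P a x₀) * a x := by
  set v : E := (a x₀)⁻¹ • (x - x₀)
  set f : E →ᵃ[ℝ] E := AffineMap.id ℝ E + (LinearMap.toSpanSingleton ℝ E v).toAffineMap.comp a
  have hf (y : E) : f y = y + a y • v := by simp [f]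
  have hapex : f x₀ = x := by
    simp [hf, v, smul_smul, hx₀.ne']
  have hbase : f '' (P ∩ {y | a y = 0}) = P ∩ {y | a y = 0} := by
    refine (image_congr fun y hy ↦ ?_).trans (image_id _)
    simp [hf, show a y = 0 from hy.2]
  have himage : f '' pyramid P a x₀ = pyramid P a x := by
    rw [pyramid, f.image_convexHull, image_insert_eq, hapex, hbase, pyramid]
  have hlinear : f.linear = LinearMap.transvection a.linear v := by
    ext y
    simp [f, LinearMap.transvection.apply]
  have hdet : f.linear.det = a x / a x₀ := by
    rw [hlinear, LinearMap.transvection.det, map_smul, ← vsub_eq_sub x x₀, a.linearMap_vsub]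
    simp only [smul_eq_mul, vsub_eq_sub]
    field_simp
    ring
  rw [← himage, measureReal_def, addHaar_image_affineMap, hdet, ENNReal.toReal_mul,
    ENNReal.toReal_ofReal (abs_nonneg _), abs_of_pos (div_pos hx hx₀), ← measureReal_def]
  field_simp

theorem exists_measureReal_pyramid_eq (P : Set E) (a : E →ᵃ[ℝ] ℝ) :
    ∃ b : E →ᵃ[ℝ] ℝ, ∀ x, (b x)⁺ = if 0 < a x then μ.real (pyramid P a x) else 0 := by
  by_cases h : ∃ x₀, 0 < a x₀
  · obtain ⟨x₀, hx₀⟩ := h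
    refine ⟨(μ.real (pyramid P a x₀) / a x₀) • a, fun x ↦ ?_⟩
    have hc : 0 ≤ μ.real (pyramid P a x₀) / a x₀ := by positivity
    split_ifs with hx
    · have : 0 ≤ μ.real (pyramid P a x₀) / a x₀ * a x := by positivity
      simp only [AffineMap.coe_smul, Pi.smul_apply, smul_eq_mul, posPart_of_nonneg this]
      rw [div_mul_eq_mul_div, ← measureReal_pyramid_mul μ P hx₀ hx, mul_div_cancel_right₀ _ hx₀.ne']
    · exact posPart_of_nonpos (mul_nonpos_of_nonneg_of_nonpos hc (not_lt.1 hx))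
  · push Not at h
    exact ⟨0, fun x ↦ by simp [(h x).not_gt]⟩

theorem measureReal_convexHull_insert_polyhedron {A : Finset (E →ᵃ[ℝ] ℝ)} {z : E}
    (hz : ∀ a ∈ A, a z = -1) (hbdd : Bornology.IsBounded (polyhedron A)) (x : E) :
    μ.real (convexHull ℝ (insert x (polyhedron A))) =
      μ.real (polyhedron A) +
        ∑ a ∈ A with 0 < a x, μ.real (pyramid (polyhedron A) a x) := by
  set P := polyhedron A
  have hzP : z ∈ P := fun a ha ↦ by simp [hz a ha]
  have hfin : μ (convexHull ℝ (insert x P)) ≠ ⊤ :=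
    (isBounded_convexHull.2 (hbdd.insert x)).measure_lt_top.ne
  have hpyr_fin (a : E →ᵃ[ℝ] ℝ) : μ (pyramid P a x) ≠ ⊤ :=
    measure_ne_top_of_subset (pyramid_subset_convexHull_insert P a x) hfin
  have hpyr_meas (a : E →ᵃ[ℝ] ℝ) : NullMeasurableSet (pyramid P a x) μ :=
    (convex_convexHull ℝ _).nullMeasurableSet μ
  have hdisjP : AEDisjoint μ P (⋃ a ∈ A.filter fun a ↦ 0 < a x, pyramid P a x) := by
    rw [AEDisjoint, inter_iUnion₂]
    refine (measure_biUnion_null_iff (Finset.countable_toSet _)).2 fun a ha ↦ ?_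
    obtain ⟨haA, hax⟩ := Finset.mem_filter.1 ha
    exact aedisjoint_polyhedron_pyramid μ haA hax
  have hunion_meas : NullMeasurableSet (⋃ a ∈ A.filter fun a ↦ 0 < a x, pyramid P a x) μ :=
    Finset.nullMeasurableSet_biUnion _ fun a _ ↦ hpyr_meas a
  have hunion_fin : μ (⋃ a ∈ A.filter fun a ↦ 0 < a x, pyramid P a x) ≠ ⊤ :=
    (measure_biUnion_lt_top (Finset.finite_toSet _) fun a _ ↦ (hpyr_fin a).lt_top).ne
  rw [convexHull_insert_polyhedron ⟨z, hzP⟩,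
    measureReal_union₀ hunion_meas hdisjP hbdd.measure_lt_top.ne hunion_fin,
    measureReal_biUnion_finset₀ (pairwise_aedisjoint_pyramid μ hz x) (fun a _ ↦ hpyr_meas a)
      fun a _ ↦ hpyr_fin a]

theorem exists_measureReal_convexHull_insert_polyhedron_eq_add_sum_posPart
    {A : Finset (E →ᵃ[ℝ] ℝ)} {z : E} (hz : ∀ a ∈ A, a z = -1)
    (hbdd : Bornology.IsBounded (polyhedron A)) :
    ∃ b : (E →ᵃ[ℝ] ℝ) → E →ᵃ[ℝ] ℝ, ∀ x,
      μ.real (convexHull ℝ (insert x (polyhedron A))) =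
        μ.real (polyhedron A) + ∑ a ∈ A, (b a x)⁺ := by
  choose b hb using exists_measureReal_pyramid_eq μ (polyhedron A)
  refine ⟨b, fun x ↦ ?_⟩
  simp only [measureReal_convexHull_insert_polyhedron μ hz hbdd, Finset.sum_filter, hb]

theorem measureReal_lt_measureReal_convexHull_insert {P : Set E} (hP : IsCompact P)
    (hint : (interior P).Nonempty) {x : E} (hx : x ∉ P) :
    μ.real P < μ.real (convexHull ℝ (insert x P)) := by
  set H := convexHull ℝ (insert x P)
  have hPH : P ⊆ H := (subset_insert x P).trans (subset_convexHull ℝ _)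
  have hxH : x ∈ closure (interior H) := by
    rw [(convex_convexHull ℝ _).closure_interior_eq_closure_of_nonempty_interior
      (hint.mono (interior_mono hPH))]
    exact subset_closure (subset_convexHull ℝ _ (mem_insert x P))
  have hopen : IsOpen (Pᶜ ∩ interior H) := hP.isClosed.isOpen_compl.inter isOpen_interior
  have hpos : 0 < μ (Pᶜ ∩ interior H) :=
    hopen.measure_pos μ (mem_closure_iff.1 hxH Pᶜ hP.isClosed.isOpen_compl hx)
  have hfin : μ H ≠ ⊤ := (isBounded_convexHull.2 (hP.isBounded.insert x)).measure_lt_top.ne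
  refine (ENNReal.toReal_lt_toReal hP.measure_lt_top.ne hfin).2 ?_
  calc μ P < μ P + μ (Pᶜ ∩ interior H) :=
        ENNReal.lt_add_right hP.measure_lt_top.ne hpos.ne'
    _ = μ (P ∪ Pᶜ ∩ interior H) :=
        (measure_union (disjoint_compl_right.mono_right inter_subset_left)
          hopen.measurableSet).symm
    _ ≤ μ H := measure_mono (union_subset hPH (inter_subset_right.trans interior_subset))

theorem measureReal_convexHull_insert_le_iff {P : Set E} (hP : IsCompact P) (hconv : Convex ℝ P)
    (hint : (interior P).Nonempty) {x : E} :
    μ.real (convexHull ℝ (insert x P)) ≤ μ.real P ↔ x ∈ P := by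
  refine ⟨fun h ↦ by_contra fun hx ↦ ?_, fun hx ↦ ?_⟩
  · exact (measureReal_lt_measureReal_convexHull_insert μ hP hint hx).not_ge h
  · rw [insert_eq_of_mem hx, hconv.convexHull_eq]

end Volume

theorem stmt17_general {E : Type*} [NormedAddCommGroup E] [NormedSpace ℝ E]
    [FiniteDimensional ℝ E] [MeasurableSpace E] [BorelSpace E] (μ : Measure E)
    [μ.IsAddHaarMeasure] {P : Set E} (hP : IsPolytope P) (hint : (interior P).Nonempty) (c : ℝ) :
    IsPolytope {x | μ.real (convexHull ℝ (P ∪ {x})) ≤ c} := by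
  have hcompact := hP.isCompact
  obtain ⟨A, rfl, hAz⟩ := hP.exists_eq_polyhedron hint.some_mem
  obtain ⟨b, hvol⟩ := exists_measureReal_convexHull_insert_polyhedron_eq_add_sum_posPart μ hAz
    hcompact.isBounded
  have hzero : {x | ∑ a ∈ A, (b a x)⁺ ≤ 0} = polyhedron A := by
    ext x
    rw [mem_ofPred_eq, ← add_le_iff_nonpos_right (μ.real (polyhedron A)), ← hvol,
      measureReal_convexHull_insert_le_iff μ hcompact hP.convex hint]
  obtain ⟨B, hB⟩ := exists_polyhedron_eq_setOf_sum_posPart_le A b (c - μ.real (polyhedron A))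
  have hsublevel : {x | μ.real (convexHull ℝ (polyhedron A ∪ {x})) ≤ c} = polyhedron B := by
    simp only [hB, union_singleton, hvol, le_sub_iff_add_le']
  rw [hsublevel]
  refine isPolytope_polyhedron (hB ▸ ?_)
  exact isBounded_setOf_le_of_convexOn (convexOn_sum_posPart A b)
    (hzero ▸ hint.mono interior_subset) (hzero ▸ hcompact.isBounded) _

theorem stmt17 {n : ℕ} (hn : 2 ≤ n) (P : Set (EuclideanSpace ℝ (Fin n)))
    (hP : ∃ S : Finset (EuclideanSpace ℝ (Fin n)), P = convexHull ℝ (S : Set _))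
    (hint : (interior P).Nonempty) (δ : ℝ) (hδ : 0 < δ) :
    ∃ S : Finset (EuclideanSpace ℝ (Fin n)), illum P δ = convexHull ℝ (S : Set _) :=
  stmt17_general volume hP hint ((volume P).toReal + δ)
end

section
/- Let P ⊂ ℝ² be a convex k-gon and Q ⊂ ℝ² a convex m-gon such that P is contained in the interior of Q, every vertex of Q belongs to a sideline of P, and every sideline of P intersects the boundary of Q in exactly two points, both of which are vertices of Q. Then m ≥ k, with equality if and only if every vertex of Q lies on exactly two sidelines of P. -/
open MeasureTheory Set Pointwise Metric

/-- `ℓ` is a sideline of the polygon `P`: the affine line spanned by a side of `P`,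
where a side is a one-dimensional face (an extreme segment with distinct endpoints). -/
def IsSideline (P ℓ : Set (EuclideanSpace ℝ (Fin 2))) : Prop :=
  ∃ a b : EuclideanSpace ℝ (Fin 2), a ≠ b ∧ IsExtreme ℝ P (segment ℝ a b) ∧
    ℓ = (affineSpan ℝ {a, b} : Set (EuclideanSpace ℝ (Fin 2)))

/-!
Seen from a point `q`, a sideline of `P` through `q` joins `q` to a rightmost or a leftmost point of
`P`, so at most two sidelines pass through `q`; through a vertex of `P` both of these lines are
sidelines and they are distinct. Each sideline contains exactly two vertices of `P`, so counting
incidences shows that there are `k` sidelines. Each sideline also contains exactly two vertices of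
`Q`, so counting incidences again gives `2k` as a sum over the `m` vertices of `Q` of numbers at
most `2`.
-/

section Segment

variable {𝕜 E : Type*} [Field 𝕜] [LinearOrder 𝕜] [IsStrictOrderedRing 𝕜]
  [AddCommGroup E] [Module 𝕜 E] {A : Set E} {a b : E}

theorem left_mem_extremePoints_segment (a b : E) : a ∈ (segment 𝕜 a b).extremePoints 𝕜 := by
  refine mem_extremePoints_iff_forall_segment.mpr
    ⟨left_mem_segment 𝕜 a b, fun x hx y hy hxy ↦ ?_⟩
  obtain rfl | hab := eq_or_ne a b
  · rw [segment_same] at hx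
    exact .inl hx
  have hax : SameRay 𝕜 (x - a) (b - a) := (mem_segment_iff_wbtw.mp hx).sameRay_vsub_left
  have hay : SameRay 𝕜 (y - a) (b - a) := (mem_segment_iff_wbtw.mp hy).sameRay_vsub_left
  have hray : SameRay 𝕜 (x -ᵥ a) (y -ᵥ a) :=
    hax.trans hay.symm fun h ↦ absurd (sub_eq_zero.mp h) hab.symm
  have hbtw : Wbtw 𝕜 x a y := mem_segment_iff_wbtw.mp hxy
  rcases wbtw_total_of_sameRay_vsub_left hray with h | h
  · exact .inl (hbtw.swap_left_iff.mp h)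
  · exact .inr (hbtw.swap_right_iff.mp (wbtw_comm.mp h)).symm

theorem left_mem_extremePoints_of_isExtreme_segment (h : IsExtreme 𝕜 A (segment 𝕜 a b)) :
    a ∈ A.extremePoints 𝕜 :=
  h.extremePoints_subset_extremePoints (left_mem_extremePoints_segment a b)

theorem right_mem_extremePoints_of_isExtreme_segment (h : IsExtreme 𝕜 A (segment 𝕜 a b)) :
    b ∈ A.extremePoints 𝕜 :=
  left_mem_extremePoints_of_isExtreme_segment (segment_symm 𝕜 a b ▸ h)

theorem inter_line_eq_segment (ha : a ∈ A.extremePoints 𝕜) (hb : b ∈ A.extremePoints 𝕜)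
    (hab : segment 𝕜 a b ⊆ A) : A ∩ line[𝕜, a, b] = segment 𝕜 a b := by
  refine Subset.antisymm ?_ (subset_inter hab ?_)
  · rintro x ⟨hxA, hx⟩
    obtain rfl | hne := eq_or_ne a b
    · simpa using hx
    rcases (collinear_insert_of_mem_affineSpan_pair hx).wbtw_or_wbtw_or_wbtw with h | h | h
    · obtain rfl : x = a := ((mem_extremePoints_iff_forall_segment.mp ha).2 x hxA b hb.1
        (mem_segment_iff_wbtw.mpr h)).resolve_right hne.symm
      exact left_mem_segment 𝕜 x b
    · obtain rfl : x = b := ((mem_extremePoints_iff_forall_segment.mp hb).2 a ha.1 x hxA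
        (mem_segment_iff_wbtw.mpr h)).resolve_left hne
      exact right_mem_segment 𝕜 a x
    · exact mem_segment_iff_wbtw.mpr (wbtw_comm.mp h)
  · exact (AffineSubspace.convex line[𝕜, a, b]).segment_subset
      (left_mem_affineSpan_pair 𝕜 a b) (right_mem_affineSpan_pair 𝕜 a b)

theorem extremePoints_inter_line (h : IsExtreme 𝕜 A (segment 𝕜 a b)) :
    A.extremePoints 𝕜 ∩ line[𝕜, a, b] = {a, b} := by
  have ha := left_mem_extremePoints_of_isExtreme_segment h
  have hb := right_mem_extremePoints_of_isExtreme_segment h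
  refine Subset.antisymm ?_ ?_
  · rintro x ⟨hx, hxl⟩
    have hseg : x ∈ segment 𝕜 a b := inter_line_eq_segment ha hb h.subset ▸ ⟨hx.1, hxl⟩
    exact ((mem_extremePoints_iff_forall_segment.mp hx).2 a ha.1 b hb.1 hseg).imp Eq.symm Eq.symm
  · rintro x (rfl | rfl)
    · exact ⟨ha, left_mem_affineSpan_pair 𝕜 _ _⟩
    · exact ⟨hb, right_mem_affineSpan_pair 𝕜 _ _⟩

theorem forall_le_or_forall_ge_of_isExtreme (hA : Convex 𝕜 A) (f : E →ₗ[𝕜] 𝕜) {r : 𝕜}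
    (h : IsExtreme 𝕜 A {x ∈ A | f x = r}) : (∀ x ∈ A, r ≤ f x) ∨ ∀ x ∈ A, f x ≤ r := by
  by_contra! hcon
  obtain ⟨⟨x, hx, hxr⟩, y, hy, hyr⟩ := hcon
  obtain ⟨z, hz, hfz⟩ : r ∈ f.toAffineMap '' openSegment 𝕜 x y := by
    rw [image_openSegment]
    exact openSegment_eq_Ioo (hxr.trans hyr) ▸ ⟨hxr, hyr⟩
  have hzA : z ∈ A := hA.openSegment_subset hx hy hz
  exact hxr.ne (h.left_mem_of_mem_openSegment hx hy ⟨hzA, hfz⟩ hz).2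

theorem isExtreme_setOf_eq_of_forall_le (f : E →ₗ[𝕜] 𝕜) {r : 𝕜} (h : ∀ x ∈ A, r ≤ f x) :
    IsExtreme 𝕜 A {x ∈ A | f x = r} := by
  refine ⟨sep_subset A _, fun x hx y hy z hz hzxy ↦ ⟨hx, ?_⟩⟩
  obtain ⟨s, t, hs, ht, hst, rfl⟩ := hzxy
  have hfz : s * f x + t * f y = r := by simpa using hz.2
  by_contra hne
  have hrx : r < f x := (h x hx).lt_of_ne' hne
  have hlt : r < s * f x + t * f y := calc
    r = s * r + t * r := by rw [← add_mul, hst, one_mul]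
    _ < s * f x + t * f y :=
      add_lt_add_of_lt_of_le (mul_lt_mul_of_pos_left hrx hs)
        (mul_le_mul_of_nonneg_left (h y hy) ht.le)
  exact hlt.ne' hfz

end Segment

section Orientation

variable {E : Type*} [NormedAddCommGroup E] [InnerProductSpace ℝ E]
  [Fact (Module.finrank ℝ E = 2)] (o : Orientation ℝ E (Fin 2)) {P V : Set E} {p q v w x : E}

theorem areaForm_eq_zero_iff_exists_smul {u w : E} (hu : u ≠ 0) :
    o.areaForm u w = 0 ↔ ∃ t : ℝ, t • u = w := by
  constructor
  · intro h
    refine ⟨inner ℝ u w / ‖u‖ ^ 2, ext_inner_right ℝ fun y ↦ ?_⟩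
    have hinner := o.inner_mul_inner_add_areaForm_mul_areaForm u w y
    rw [h, zero_mul, add_zero] at hinner
    rw [real_inner_smul_left, div_mul_eq_mul_div, hinner, mul_div_cancel_left₀ _ (by positivity)]
  · rintro ⟨t, rfl⟩
    simp

theorem mem_line_iff_areaForm_eq_zero (hpq : p ≠ q) :
    x ∈ line[ℝ, q, p] ↔ o.areaForm (p - q) (x - q) = 0 := by
  rw [areaForm_eq_zero_iff_exists_smul o (sub_ne_zero.mpr hpq),
    mem_affineSpan_pair_iff_exists_lineMap_eq]
  simp [AffineMap.lineMap_apply, eq_sub_iff_add_eq]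

theorem setOf_areaForm_eq_eq_inter_line (hpq : p ≠ q) :
    {x ∈ P | o.areaForm (p - q) x = o.areaForm (p - q) q} = P ∩ line[ℝ, q, p] := by
  ext x
  rw [mem_inter_iff, SetLike.mem_coe, mem_line_iff_areaForm_eq_zero o hpq,
    map_sub (o.areaForm (p - q)), sub_eq_zero]
  rfl

theorem exists_areaForm_ne_zero_of_interior_nonempty (hP : (interior P).Nonempty) (hpq : p ≠ q) :
    ∃ x ∈ P, o.areaForm (p - q) (x - q) ≠ 0 := by
  by_contra! h
  have hPline : P ⊆ line[ℝ, q, p] := fun x hx ↦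
    (mem_line_iff_areaForm_eq_zero o hpq).mpr (h x hx)
  have hline : line[ℝ, q, p] = ⊤ := by
    rw [eq_top_iff, ← isOpen_interior.affineSpan_eq_top hP]
    exact affineSpan_le.mpr (interior_subset.trans hPline)
  have hrot : q + o.rightAngleRotation (p - q) ∈ line[ℝ, q, p] := hline ▸ AffineSubspace.mem_top ..
  rw [mem_line_iff_areaForm_eq_zero o hpq, add_sub_cancel_left,
    o.areaForm_rightAngleRotation_right, inner_self_eq_zero] at hrot
  exact hpq (sub_eq_zero.mp hrot)

/-- `p` is a rightmost point of `P` as seen from `q`: with respect to the orientation `o`, no point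
of `P` lies to the right of the line through `q` directed towards `p`. Leftmost points are the
rightmost points for `-o`. The point `q` may belong to `P`. -/
def IsRightmost (P : Set E) (q p : E) : Prop :=
  p ∈ P ∧ p ≠ q ∧ ∀ x ∈ P, 0 ≤ o.areaForm (p - q) (x - q)

theorem exists_mem_forall_areaForm_nonneg {D : Set E} {n : E} (hD : D.Finite) (hne : D.Nonempty)
    (hn : ∀ d ∈ D, 0 < inner ℝ n d) : ∃ u ∈ D, ∀ d ∈ D, 0 ≤ o.areaForm u d := by
  -- The slope `ω n d / ⟪n, d⟫` orders the directions of the half-plane `0 < ⟪n, ·⟫` by angle.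
  obtain ⟨u, hu, hmin⟩ := exists_min_image D (fun d ↦ o.areaForm n d / inner ℝ n d) hD hne
  refine ⟨u, hu, fun d hd ↦ ?_⟩
  have hslope : o.areaForm n u * inner ℝ n d ≤ o.areaForm n d * inner ℝ n u :=
    (div_le_div_iff₀ (hn u hu) (hn d hd)).mp (hmin d hd)
  have hn0 : n ≠ 0 := by
    rintro rfl
    simpa using hn u hu
  have hscaled : 0 ≤ ‖n‖ ^ 2 * o.areaForm u d := by
    rw [← o.inner_mul_areaForm_sub]
    linarith
  exact nonneg_of_mul_nonneg_right hscaled (by positivity)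

theorem exists_isRightmost_convexHull_of_notMem (hV : V.Finite) (hne : V.Nonempty)
    (hv : v ∉ convexHull ℝ V) : ∃ w ∈ V, IsRightmost o (convexHull ℝ (insert v V)) v w := by
  have := FiniteDimensional.of_fact_finrank_eq_two (K := ℝ) (V := E)
  obtain ⟨f, r, hfv, hfV⟩ := geometric_hahn_banach_point_closed (convex_convexHull ℝ V)
    (hV.isClosed_convexHull (𝕜 := ℝ)) hv
  have hpos : ∀ d ∈ (· - v) '' V, 0 < inner ℝ ((InnerProductSpace.toDual ℝ E).symm f) d := by
    rintro _ ⟨w, hw, rfl⟩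
    rw [InnerProductSpace.toDual_symm_apply, map_sub, sub_pos]
    exact hfv.trans (hfV w (subset_convexHull ℝ V hw))
  obtain ⟨_, ⟨w, hw, rfl⟩, hmin⟩ :=
    exists_mem_forall_areaForm_nonneg o (hV.image (· - v)) (hne.image _) hpos
  refine ⟨w, hw, subset_convexHull ℝ _ (mem_insert_of_mem v hw), ?_, fun x hx ↦ ?_⟩
  · rintro rfl
    exact hv (subset_convexHull ℝ V hw)
  have hhalf : insert v V ⊆ {x | o.areaForm (w - v) v ≤ o.areaForm (w - v) x} := by
    refine insert_subset (mem_ofPred_eq ▸ le_rfl) fun y hy ↦ ?_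
    rw [mem_ofPred_eq, ← sub_nonneg, ← map_sub]
    exact hmin _ (mem_image_of_mem _ hy)
  rw [map_sub, sub_nonneg]
  exact convexHull_min hhalf (convex_halfSpace_ge (o.areaForm (w - v)).isLinear _) hx

theorem exists_mem_extremePoints_isRightmost (hP : IsCompact P) (hconv : Convex ℝ P)
    (hfin : (P.extremePoints ℝ).Finite) (hnt : P.Nontrivial) (hv : v ∈ P.extremePoints ℝ) :
    ∃ w ∈ P.extremePoints ℝ, IsRightmost o P v w := by
  have hhull : convexHull ℝ (P.extremePoints ℝ) = P := by
    rw [← (hfin.isClosed_convexHull (𝕜 := ℝ)).closure_eq]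
    exact closure_convexHull_extremePoints hP hconv
  have hinsert : insert v (P.extremePoints ℝ \ {v}) = P.extremePoints ℝ := by
    rw [insert_sdiff_singleton, insert_eq_of_mem hv]
  have hnotMem : v ∉ convexHull ℝ (P.extremePoints ℝ \ {v}) := fun h ↦
    (hconv.mem_extremePoints_iff_mem_sdiff_convexHull_sdiff.mp hv).2
      (convexHull_mono (sdiff_subset_sdiff_left extremePoints_subset) h)
  have hne : (P.extremePoints ℝ \ {v}).Nonempty := by
    by_contra hempty
    rw [not_nonempty_iff_eq_empty] at hempty
    rw [hempty, insert_empty_eq] at hinsert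
    rw [← hinsert, convexHull_singleton] at hhull
    exact not_nontrivial_singleton (hhull ▸ hnt)
  obtain ⟨w, hw, hright⟩ :=
    exists_isRightmost_convexHull_of_notMem o (hfin.subset sdiff_subset) hne hnotMem
  rw [hinsert, hhull] at hright
  exact ⟨w, hw.1, hright⟩

variable {o}

theorem subsingleton_setOf_line_of_isRightmost :
    {ℓ : Set E | ∃ p, IsRightmost o P q p ∧ line[ℝ, q, p] = ℓ}.Subsingleton := by
  rintro _ ⟨p, h, rfl⟩ _ ⟨p', h', rfl⟩
  have hle : o.areaForm (p' - q) (p - q) ≤ 0 := by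
    rw [o.areaForm_swap, neg_nonpos]
    exact h.2.2 p' h'.1
  have hmem : p ∈ line[ℝ, q, p'] :=
    (mem_line_iff_areaForm_eq_zero o h'.2.1).mpr (hle.antisymm (h'.2.2 p h.1))
  rw [affineSpan_pair_eq_of_right_mem_of_ne hmem h.2.1]

theorem not_isRightmost_neg (hP : (interior P).Nonempty) (h : IsRightmost o P q p) :
    ¬IsRightmost (-o) P q p := by
  intro h'
  obtain ⟨x, hx, hne⟩ := exists_areaForm_ne_zero_of_interior_nonempty o hP h.2.1
  have hle : 0 ≤ -o.areaForm (p - q) (x - q) := by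
    simpa only [o.areaForm_neg_orientation, LinearMap.neg_apply] using h'.2.2 x hx
  exact hne ((neg_nonneg.mp hle).antisymm (h.2.2 x hx))

theorem exists_isRightmost_of_isExtreme_segment (o : Orientation ℝ E (Fin 2)) {a b : E}
    (hP : Convex ℝ P) (hab : a ≠ b) (h : IsExtreme ℝ P (segment ℝ a b)) (hq : q ∈ line[ℝ, a, b]) :
    ∃ p, line[ℝ, q, p] = line[ℝ, a, b] ∧ (IsRightmost o P q p ∨ IsRightmost (-o) P q p) := by
  obtain ⟨p, hpP, hpl, hpq⟩ : ∃ p ∈ P, p ∈ line[ℝ, a, b] ∧ p ≠ q := by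
    obtain rfl | haq := eq_or_ne a q
    · exact ⟨b, h.subset (right_mem_segment ℝ a b), right_mem_affineSpan_pair ℝ a b, hab.symm⟩
    · exact ⟨a, h.subset (left_mem_segment ℝ a b), left_mem_affineSpan_pair ℝ a b, haq⟩
  have hline : line[ℝ, q, p] = line[ℝ, a, b] :=
    affineSpan_pair_eq_of_mem_of_mem_of_ne hq hpl hpq.symm
  have hface : IsExtreme ℝ P {x ∈ P | o.areaForm (p - q) x = o.areaForm (p - q) q} := by
    rwa [setOf_areaForm_eq_eq_inter_line o hpq, hline,
      inter_line_eq_segment (left_mem_extremePoints_of_isExtreme_segment h)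
        (right_mem_extremePoints_of_isExtreme_segment h) h.subset]
  refine ⟨p, hline, (forall_le_or_forall_ge_of_isExtreme hP _ hface).imp ?_ ?_⟩
  · refine fun hle ↦ ⟨hpP, hpq, fun x hx ↦ ?_⟩
    rw [map_sub, sub_nonneg]
    exact hle x hx
  · refine fun hle ↦ ⟨hpP, hpq, fun x hx ↦ ?_⟩
    rw [o.areaForm_neg_orientation, map_sub, sub_nonneg]
    exact neg_le_neg (hle x hx)

theorem isExtreme_segment_of_isRightmost (hP : Convex ℝ P) (hv : v ∈ P.extremePoints ℝ)
    (hw : w ∈ P.extremePoints ℝ) (h : IsRightmost o P v w) :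
    IsExtreme ℝ P (segment ℝ v w) := by
  rw [← inter_line_eq_segment hv hw (hP.segment_subset hv.1 hw.1),
    ← setOf_areaForm_eq_eq_inter_line o h.2.1]
  refine isExtreme_setOf_eq_of_forall_le _ fun x hx ↦ ?_
  rw [← sub_nonneg, ← map_sub]
  exact h.2.2 x hx

theorem line_ne_line_of_isRightmost_neg {w' : E} (hP : Convex ℝ P) (hint : (interior P).Nonempty)
    (hv : v ∈ P.extremePoints ℝ) (hw : w ∈ P.extremePoints ℝ) (hw' : w' ∈ P.extremePoints ℝ)
    (h : IsRightmost o P v w) (h' : IsRightmost (-o) P v w') :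
    line[ℝ, v, w] ≠ line[ℝ, v, w'] := by
  intro heq
  have hmem : w' ∈ ({v, w} : Set E) := by
    rw [← extremePoints_inter_line (isExtreme_segment_of_isRightmost hP hv hw h), heq]
    exact ⟨hw', right_mem_affineSpan_pair ℝ v w'⟩
  obtain rfl : w' = w := hmem.resolve_left h'.2.1
  exact not_isRightmost_neg hint h h'

end Orientation

section DoubleCounting

variable {α : Type*} {p : Set α → Prop} {X : Set α} {n : ℕ}

theorem sum_ncard_mem_eq (hp : {ℓ | p ℓ}.Finite) (hX : X.Finite)
    (h : ∀ ℓ, p ℓ → (X ∩ ℓ).ncard = n) :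
    ∑ x ∈ hX.toFinset, {ℓ | p ℓ ∧ x ∈ ℓ}.ncard = {ℓ | p ℓ}.ncard * n := by
  classical
  have habove (x : α) : {ℓ | p ℓ ∧ x ∈ ℓ}.ncard =
      (hp.toFinset.bipartiteAbove (fun x ℓ ↦ x ∈ ℓ) x).card := by
    rw [← ncard_coe_finset]
    simp only [Finset.bipartiteAbove, Finset.coe_filter, Finite.mem_toFinset, mem_ofPred_eq]
  have hbelow : ∀ ℓ ∈ hp.toFinset,
      (hX.toFinset.bipartiteBelow (fun x ℓ ↦ x ∈ ℓ) ℓ).card = n := by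
    intro ℓ hℓ
    rw [← h ℓ (hp.mem_toFinset.mp hℓ), ← ncard_coe_finset]
    simp only [Finset.bipartiteBelow, Finset.coe_filter, Finite.mem_toFinset, inter_def]
  simp_rw [habove]
  rw [Finset.sum_card_bipartiteAbove_eq_sum_card_bipartiteBelow,
    Finset.sum_const_nat hbelow, ncard_eq_toFinset_card _ hp]

theorem ncard_setOf_le_and_eq_iff (hn : n ≠ 0) (hp : {ℓ | p ℓ}.Finite) (hX : X.Finite)
    (h : ∀ ℓ, p ℓ → (X ∩ ℓ).ncard = n) (hle : ∀ x ∈ X, {ℓ | p ℓ ∧ x ∈ ℓ}.ncard ≤ n) :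
    {ℓ | p ℓ}.ncard ≤ X.ncard ∧
      ({ℓ | p ℓ}.ncard = X.ncard ↔ ∀ x ∈ X, {ℓ | p ℓ ∧ x ∈ ℓ}.ncard = n) := by
  have hle' : ∀ x ∈ hX.toFinset, {ℓ | p ℓ ∧ x ∈ ℓ}.ncard ≤ n := by simpa using hle
  have hconst : ∑ _x ∈ hX.toFinset, n = X.ncard * n := by
    rw [Finset.sum_const, smul_eq_mul, ncard_eq_toFinset_card X hX]
  have hsum_le := Finset.sum_le_sum hle'
  have hsum_eq := Finset.sum_eq_sum_iff_of_le hle'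
  rw [sum_ncard_mem_eq hp hX h, hconst] at hsum_le hsum_eq
  rw [Nat.mul_left_inj hn] at hsum_eq
  exact ⟨Nat.le_of_mul_le_mul_right hsum_le (Nat.pos_of_ne_zero hn), by simpa using hsum_eq⟩

end DoubleCounting

section Sideline

open scoped EuclideanSpace

variable {P Q ℓ : Set (EuclideanSpace ℝ (Fin 2))} {v w : EuclideanSpace ℝ (Fin 2)}

theorem ncard_extremePoints_inter_of_isSideline (hℓ : IsSideline P ℓ) :
    (P.extremePoints ℝ ∩ ℓ).ncard = 2 := by
  obtain ⟨a, b, hab, hside, rfl⟩ := hℓ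
  rw [extremePoints_inter_line hside, ncard_pair hab]

theorem finite_setOf_isSideline (hfin : (P.extremePoints ℝ).Finite) :
    {ℓ | IsSideline P ℓ}.Finite := by
  refine (hfin.image2 (fun a b ↦ (line[ℝ, a, b] : Set _)) hfin).subset ?_
  rintro _ ⟨a, b, -, hside, rfl⟩
  exact mem_image2_of_mem (left_mem_extremePoints_of_isExtreme_segment hside)
    (right_mem_extremePoints_of_isExtreme_segment hside)

theorem ncard_setOf_isSideline_mem_le_two (hP : Convex ℝ P) (q : EuclideanSpace ℝ (Fin 2)) :
    {ℓ | IsSideline P ℓ ∧ q ∈ ℓ}.ncard ≤ 2 := by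
  let o := (EuclideanSpace.basisFun (Fin 2) ℝ).toBasis.orientation
  let R (o' : Orientation ℝ (EuclideanSpace ℝ (Fin 2)) (Fin 2)) :
      Set (Set (EuclideanSpace ℝ (Fin 2))) := {ℓ | ∃ p, IsRightmost o' P q p ∧ line[ℝ, q, p] = ℓ}
  have hR (o') : (R o').encard ≤ 1 :=
    encard_le_one_iff_subsingleton.mpr subsingleton_setOf_line_of_isRightmost
  have hsub : {ℓ | IsSideline P ℓ ∧ q ∈ ℓ} ⊆ R o ∪ R (-o) := by
    rintro _ ⟨⟨a, b, hab, hside, rfl⟩, hq⟩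
    obtain ⟨p, hline, hp⟩ := exists_isRightmost_of_isExtreme_segment o hP hab hside hq
    exact hp.imp (fun h ↦ ⟨p, h, congrArg _ hline⟩) fun h ↦ ⟨p, h, congrArg _ hline⟩
  refine ENat.toNat_le_of_le_natCast ?_
  calc {ℓ | IsSideline P ℓ ∧ q ∈ ℓ}.encard
    _ ≤ (R o ∪ R (-o)).encard := encard_le_encard hsub
    _ ≤ (R o).encard + (R (-o)).encard := encard_union_le _ _
    _ ≤ 1 + 1 := add_le_add (hR o) (hR (-o))
    _ = (2 : ℕ) := one_add_one_eq_two

theorem isSideline_line_of_isRightmost {o : Orientation ℝ (EuclideanSpace ℝ (Fin 2)) (Fin 2)}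
    (hP : Convex ℝ P) (hv : v ∈ P.extremePoints ℝ) (hw : w ∈ P.extremePoints ℝ)
    (h : IsRightmost o P v w) : IsSideline P line[ℝ, v, w] :=
  ⟨v, w, h.2.1.symm, isExtreme_segment_of_isRightmost hP hv hw h, rfl⟩

theorem ncard_setOf_isSideline_mem_eq_two (hP : IsConvexBody P)
    (hfin : (P.extremePoints ℝ).Finite) (hv : v ∈ P.extremePoints ℝ) :
    {ℓ | IsSideline P ℓ ∧ v ∈ ℓ}.ncard = 2 := by
  obtain ⟨hcompact, hconv, z, hz⟩ := hP
  have hnt : P.Nontrivial :=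
    (infinite_of_mem_nhds z (mem_interior_iff_mem_nhds.mp hz)).nontrivial
  let o := (EuclideanSpace.basisFun (Fin 2) ℝ).toBasis.orientation
  obtain ⟨w, hw, hright⟩ := exists_mem_extremePoints_isRightmost o hcompact hconv hfin hnt hv
  obtain ⟨w', hw', hleft⟩ := exists_mem_extremePoints_isRightmost (-o) hcompact hconv hfin hnt hv
  have hlines : (line[ℝ, v, w] : Set (EuclideanSpace ℝ (Fin 2))) ≠ line[ℝ, v, w'] :=
    SetLike.coe_injective.ne
      (line_ne_line_of_isRightmost_neg hconv ⟨z, hz⟩ hv hw hw' hright hleft)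
  have hsub : {(line[ℝ, v, w] : Set (EuclideanSpace ℝ (Fin 2))), ↑line[ℝ, v, w']} ⊆
      {ℓ | IsSideline P ℓ ∧ v ∈ ℓ} := by
    rintro _ (rfl | rfl)
    · exact ⟨isSideline_line_of_isRightmost hconv hv hw hright, left_mem_affineSpan_pair ℝ v w⟩
    · exact ⟨isSideline_line_of_isRightmost hconv hv hw' hleft, left_mem_affineSpan_pair ℝ v w'⟩
  refine (ncard_setOf_isSideline_mem_le_two hconv v).antisymm ?_
  exact (ncard_pair hlines).ge.trans
    (ncard_le_ncard hsub ((finite_setOf_isSideline hfin).subset fun _ ↦ And.left))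

theorem ncard_setOf_isSideline (hP : IsConvexBody P) (hfin : (P.extremePoints ℝ).Finite) :
    {ℓ | IsSideline P ℓ}.ncard = (P.extremePoints ℝ).ncard :=
  (ncard_setOf_le_and_eq_iff two_ne_zero (finite_setOf_isSideline hfin) hfin
    (fun _ ↦ ncard_extremePoints_inter_of_isSideline)
    fun v _ ↦ ncard_setOf_isSideline_mem_le_two hP.2.1 v).2.mpr
      fun _ ↦ ncard_setOf_isSideline_mem_eq_two hP hfin

theorem ncard_extremePoints_inter_eq_two
    (h : ∃ a b : EuclideanSpace ℝ (Fin 2), a ≠ b ∧ a ∈ Q.extremePoints ℝ ∧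
      b ∈ Q.extremePoints ℝ ∧ ℓ ∩ frontier Q = {a, b}) :
    (Q.extremePoints ℝ ∩ ℓ).ncard = 2 := by
  obtain ⟨a, b, hab, ha, hb, hfr⟩ := h
  have hsub : Q.extremePoints ℝ ⊆ frontier Q := fun x hx ↦
    ⟨subset_closure hx.1, (disjoint_interior_extremePoints Q).notMem_of_mem_right hx⟩
  have hinter : Q.extremePoints ℝ ∩ ℓ = {a, b} := by
    refine Subset.antisymm (fun x hx ↦ hfr ▸ ⟨hx.2, hsub hx.1⟩) fun x hx ↦ ?_
    have hxℓ : x ∈ ℓ ∩ frontier Q := hfr ▸ hx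
    rcases hx with rfl | rfl
    · exact ⟨ha, hxℓ.1⟩
    · exact ⟨hb, hxℓ.1⟩
  rw [hinter, ncard_pair hab]

theorem stmt18_general {X : Set (EuclideanSpace ℝ (Fin 2))} (hP : IsConvexBody P)
    (hPfin : (P.extremePoints ℝ).Finite) (hX : X.Finite)
    (hside : ∀ ℓ, IsSideline P ℓ → (X ∩ ℓ).ncard = 2) :
    (P.extremePoints ℝ).ncard ≤ X.ncard ∧
      ((P.extremePoints ℝ).ncard = X.ncard ↔ ∀ x ∈ X, {ℓ | IsSideline P ℓ ∧ x ∈ ℓ}.ncard = 2) := by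
  rw [← ncard_setOf_isSideline hP hPfin]
  exact ncard_setOf_le_and_eq_iff two_ne_zero (finite_setOf_isSideline hPfin) hX hside
    fun x _ ↦ ncard_setOf_isSideline_mem_le_two hP.2.1 x

end Sideline

theorem stmt18 (P Q : Set (EuclideanSpace ℝ (Fin 2))) (k m : ℕ)
    (hP : IsConvexBody P) (hQ : IsConvexBody Q)
    (hPfin : (Set.extremePoints ℝ P).Finite) (hk : (Set.extremePoints ℝ P).ncard = k)
    (hQfin : (Set.extremePoints ℝ Q).Finite) (hm : (Set.extremePoints ℝ Q).ncard = m)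
    (hPQ : P ⊆ interior Q)
    (hvert : ∀ q ∈ Set.extremePoints ℝ Q, ∃ ℓ, IsSideline P ℓ ∧ q ∈ ℓ)
    (hside : ∀ ℓ, IsSideline P ℓ → ∃ a b : EuclideanSpace ℝ (Fin 2), a ≠ b ∧
      a ∈ Set.extremePoints ℝ Q ∧ b ∈ Set.extremePoints ℝ Q ∧ ℓ ∩ frontier Q = {a, b}) :
    k ≤ m ∧
      (k = m ↔ ∀ q ∈ Set.extremePoints ℝ Q, {ℓ | IsSideline P ℓ ∧ q ∈ ℓ}.ncard = 2) := by
  subst hk hm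
  exact stmt18_general hP hPfin hQfin fun ℓ hℓ ↦ ncard_extremePoints_inter_eq_two (hside ℓ hℓ)
end
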